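/- arXiv:1304.0231 — 2 statements merged into one kernel-verified Lean document; each statement's English description precedes it below -/
import Mathlib

section
/- Let K be a field of characteristic ≠ 3 in which 1 is the only cube root of unity. Then O is a maximal partial spread of P₃(K): any two distinct members of O have trivial intersection, and for every 2-dimensional subspace m of K⁴ that does not belong to O there exists ℓ ∈ O with ℓ ∩ m ≠ {0}. -/
/-- The Cayley cubic form `f(x₀,x₁,x₂,x₃) = x₀x₁x₂ − x₁³ − x₀²x₃`. -/
def cayleyF {K : Type*} [Field K] (x : Fin 4 → K) : K :=
  x 0 * x 1 * x 2 - (x 1) ^ 3 - (x 0) ^ 2 * x 3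

/-- The affine point `P(u₁,u₂)` of the Cayley surface. -/
def cayleyP (K : Type*) [Field K] (u₁ u₂ : K) : Fin 4 → K :=
  ![1, u₁, u₂, u₁ * u₂ - u₁ ^ 3]

/-- The direction vector `d(u₁,u₂) = (0,1,3u₁,u₂)`. -/
def cayleyD (K : Type*) [Field K] (u₁ u₂ : K) : Fin 4 → K :=
  ![0, 1, 3 * u₁, u₂]

/-- The osculating tangent `ℓ(u₁,u₂) = span{P(u₁,u₂), d(u₁,u₂)}`. -/
def oscTang (K : Type*) [Field K] (u₁ u₂ : K) : Submodule K (Fin 4 → K) :=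
  Submodule.span K {cayleyP K u₁ u₂, cayleyD K u₁ u₂}

/-- The line `g∞ = span{(0,0,1,0), (0,0,0,1)}`. -/
def gInf (K : Type*) [Field K] : Submodule K (Fin 4 → K) :=
  Submodule.span K {![0, 0, 1, 0], ![0, 0, 0, 1]}

/-- The Betten–Walker line set `O`: all osculating tangents together with `g∞`. -/
def BWset (K : Type*) [Field K] : Set (Submodule K (Fin 4 → K)) :=
  {ℓ | ∃ u₁ u₂ : K, ℓ = oscTang K u₁ u₂} ∪ {gInf K}


theorem mem_oscTang {K : Type*} [Field K] (a b : K) (x : Fin 4 → K) :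
    x ∈ oscTang K a b ↔ ∃ c t : K, x 0 = c ∧ x 1 = c * a + t ∧ x 2 = c * b + t * (3 * a) ∧
      x 3 = c * (a * b - a ^ 3) + t * b := by
  unfold oscTang
  rw [Submodule.mem_span_pair]
  constructor
  · rintro ⟨c, t, rfl⟩
    exact ⟨c, t, by simp [cayleyP, cayleyD]⟩
  · rintro ⟨c, t, h0, h1, h2, h3⟩
    refine ⟨c, t, ?_⟩
    funext i
    fin_cases i <;> simp [cayleyP, cayleyD, h0, h1, h2, h3]

theorem mem_gInf {K : Type*} [Field K] (x : Fin 4 → K) :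
    x ∈ gInf K ↔ x 0 = 0 ∧ x 1 = 0 := by
  unfold gInf
  rw [Submodule.mem_span_pair]
  constructor
  · rintro ⟨c, t, rfl⟩
    simp
  · rintro ⟨h0, h1⟩
    refine ⟨x 2, x 3, ?_⟩
    funext i
    fin_cases i <;> simp [h0, h1]

theorem cube_inj {K : Type*} [Field K] (hroot : ∀ w : K, w ^ 3 = 1 → w = 1) (s t : K)
    (h : t ^ 3 = s ^ 3) : t = s := by
  by_cases hs : s = 0
  · subst hs
    simpa using h
  · have := hroot (t / s) (by rw [div_pow, h, div_self (pow_ne_zero 3 hs)])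
    rwa [div_eq_one_iff_eq hs] at this

theorem osc_meet {K : Type*} [Field K] (h3 : (3 : K) ≠ 0)
    (hroot : ∀ w : K, w ^ 3 = 1 → w = 1) (a b a₂ b₂ : K) (x : Fin 4 → K)
    (h : x ∈ oscTang K a b) (hh : x ∈ oscTang K a₂ b₂) (hx : x ≠ 0) : a = a₂ ∧ b = b₂ := by
  rw [mem_oscTang] at h hh
  obtain ⟨c, t, e0, e1, e2, e3⟩ := h
  obtain ⟨c₂, s, f0, f1, f2, f3⟩ := hh
  obtain rfl : c = c₂ := e0.symm.trans f0
  by_cases hc : c = 0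
  · subst hc
    simp only [zero_mul, zero_add] at *
    obtain rfl : t = s := e1.symm.trans f1
    have ht : t ≠ 0 := by
      rintro rfl
      apply hx
      funext i
      fin_cases i <;> simp [*]
    exact ⟨mul_left_cancel₀ h3 (mul_left_cancel₀ ht (e2.symm.trans f2)),
      mul_left_cancel₀ ht (e3.symm.trans f3)⟩
  · obtain ⟨t, rfl⟩ : ∃ r, t = c * r := ⟨t / c, by field_simp⟩
    obtain ⟨s, rfl⟩ : ∃ r, s = c * r := ⟨s / c, by field_simp⟩
    have g1 : a + t = a₂ + s := mul_left_cancel₀ hc (by linear_combination f1 - e1)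
    have g2 : b + t * (3 * a) = b₂ + s * (3 * a₂) :=
      mul_left_cancel₀ hc (by linear_combination f2 - e2)
    have g3 : (a * b - a ^ 3) + t * b = (a₂ * b₂ - a₂ ^ 3) + s * b₂ :=
      mul_left_cancel₀ hc (by linear_combination f3 - e3)
    obtain rfl : s = a + t - a₂ := by linear_combination -g1
    have hts : t = a + t - a₂ := cube_inj hroot _ _ (by linear_combination g3 - (a + t) * g2)
    obtain rfl : a = a₂ := by linear_combination -hts
    exact ⟨rfl, by linear_combination g2⟩

theorem osc_gInf {K : Type*} [Field K] (a b : K) (x : Fin 4 → K)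
    (h : x ∈ oscTang K a b) (hh : x ∈ gInf K) : x = 0 := by
  rw [mem_oscTang] at h
  rw [mem_gInf] at hh
  obtain ⟨c, t, e0, e1, e2, e3⟩ := h
  obtain rfl : c = 0 := e0.symm.trans hh.1
  obtain rfl : t = 0 := by simpa [hh.2] using e1.symm
  funext i
  fin_cases i <;> simp [*]

/-- if `char K ≠ 3` and `1` is the only cube root of unity in `K`, then
`O` is a maximal partial spread of `P₃(K)`. -/
theorem bw_maximal_partial_spread (K : Type*) [Field K]
    (hchar : ringChar K ≠ 3) (hroot : ∀ w : K, w ^ 3 = 1 → w = 1) :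
    (∀ ℓ ∈ BWset K, ∀ m ∈ BWset K, ℓ ≠ m → ℓ ⊓ m = ⊥) ∧
      (∀ m : Submodule K (Fin 4 → K), Module.finrank K m = 2 → m ∉ BWset K →
        ∃ ℓ ∈ BWset K, ℓ ⊓ m ≠ ⊥) := by
  have h3 : (3 : K) ≠ 0 := by
    intro h
    have hd : ringChar K ∣ 3 := ringChar.dvd (by exact_mod_cast h)
    rcases (Nat.dvd_prime Nat.prime_three).1 hd with h1 | h1
    · have : ((1 : ℕ) : K) = 0 := (ringChar.spec K 1).2 (by rw [h1])
      simp at this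
    · exact hchar h1
  constructor
  · intro ℓ hℓ m hm hne
    rw [Submodule.eq_bot_iff]
    rintro x ⟨hxl, hxm⟩
    by_contra hx
    rcases hℓ with ⟨a, b, rfl⟩ | rfl <;> rcases hm with ⟨a₂, b₂, rfl⟩ | rfl
    · obtain ⟨rfl, rfl⟩ := osc_meet h3 hroot a b a₂ b₂ x hxl hxm hx
      exact hne rfl
    · exact hx (osc_gInf a b x hxl hxm)
    · exact hx (osc_gInf a₂ b₂ x hxm hxl)
    · exact hne rfl
  · intro m hm _
    obtain ⟨x, hxm, hx, hx0⟩ : ∃ x ∈ m, x ≠ 0 ∧ x 0 = 0 := by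
      let φ : m →ₗ[K] K := (LinearMap.proj 0 : (Fin 4 → K) →ₗ[K] K).comp m.subtype
      have hk : LinearMap.ker φ ≠ ⊥ := by
        have : FiniteDimensional K m := inferInstance
        exact LinearMap.ker_ne_bot_of_finrank_lt (by rw [hm]; simp)
      obtain ⟨y, hy, hy0⟩ := Submodule.exists_mem_ne_zero_of_ne_bot hk
      exact ⟨y, y.2, fun h => hy0 (Subtype.ext h), hy⟩
    by_cases hx1 : x 1 = 0
    · exact ⟨gInf K, Or.inr rfl, (Submodule.ne_bot_iff _).2
        ⟨x, ⟨(mem_gInf x).2 ⟨hx0, hx1⟩, hxm⟩, hx⟩⟩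
    · refine ⟨oscTang K (x 2 / (3 * x 1)) (x 3 / x 1), Or.inl ⟨_, _, rfl⟩,
        (Submodule.ne_bot_iff _).2 ⟨x, ⟨(mem_oscTang _ _ x).2 ⟨0, x 1, hx0, ?_, ?_, ?_⟩, hxm⟩, hx⟩⟩
      · ring
      · field_simp
        ring
      · field_simp
        ring
end

section
/- Let K be a field. The set O is a covering of P₃(K) — i.e., every nonzero vector of K⁴ lies in some member of O — if and only if the characteristic of K is not 3 and every element of K has a cube root in K. -/
theorem mem_oscTang_iff (K : Type*) [Field K] (u₁ u₂ : K) (x : Fin 4 → K) :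
    x ∈ oscTang K u₁ u₂ ↔ ∃ a b : K, a = x 0 ∧ a * u₁ + b = x 1 ∧
      a * u₂ + b * (3 * u₁) = x 2 ∧ a * (u₁ * u₂ - u₁ ^ 3) + b * u₂ = x 3 := by
  simp [oscTang, Submodule.mem_span_pair, cayleyP, cayleyD, funext_iff, Fin.forall_fin_succ]

theorem mem_gInf_iff (K : Type*) [Field K] (x : Fin 4 → K) :
    x ∈ gInf K ↔ x 0 = 0 ∧ x 1 = 0 := by
  simp only [gInf, Submodule.mem_span_pair, funext_iff, Fin.forall_fin_succ]
  simp
  grind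

theorem three_eq_zero_iff_ringChar (K : Type*) [Field K] : (3 : K) = 0 ↔ ringChar K = 3 := by
  constructor
  · intro h
    have h1 : ringChar K ∣ 3 := (ringChar.spec K 3).1 (by exact_mod_cast h)
    rcases (Nat.dvd_prime Nat.prime_three).1 h1 with h2 | h2
    · exact absurd h2 (CharP.ringChar_ne_one)
    · exact h2
  · intro h
    have := (ringChar.spec K 3).2 (by rw [h])
    exact_mod_cast this

theorem covered_iff (K : Type*) [Field K] (x : Fin 4 → K) :
    (∃ ℓ ∈ BWset K, x ∈ ℓ) ↔ (∃ u₁ u₂, x ∈ oscTang K u₁ u₂) ∨ x ∈ gInf K := by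
  constructor
  · rintro ⟨ℓ, ⟨u, v, rfl⟩ | rfl, hx⟩
    · exact Or.inl ⟨u, v, hx⟩
    · exact Or.inr hx
  · rintro (⟨u, v, hx⟩ | hx)
    · exact ⟨_, Or.inl ⟨u, v, rfl⟩, hx⟩
    · exact ⟨_, Or.inr rfl, hx⟩

/-- `O` is a covering of `P₃(K)` iff `char K ≠ 3` and every element of
`K` has a cube root in `K`. -/
theorem bw_covering_iff (K : Type*) [Field K] :
    (∀ x : Fin 4 → K, x ≠ 0 → ∃ ℓ ∈ BWset K, x ∈ ℓ) ↔
      (ringChar K ≠ 3 ∧ ∀ a : K, ∃ r : K, r ^ 3 = a) := by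
  simp only [covered_iff, mem_oscTang_iff, mem_gInf_iff, Ne, ← three_eq_zero_iff_ringChar]
  constructor
  · intro H
    constructor
    · intro h3
      rcases H ![0, 1, 1, 0] (fun h => one_ne_zero (congrFun h 1)) with ⟨u, v, a, b, h⟩ | h
      · simp [h3] at h
        obtain ⟨rfl, -, h2, -⟩ := h
        simp at h2
      · simp at h
    · intro c
      rcases H ![1, 0, 0, c] (fun h => one_ne_zero (congrFun h 0)) with ⟨u, v, a, b, h⟩ | h
      · simp at h
        obtain ⟨rfl, h1, h2, h4⟩ := h
        exact ⟨b, by grind⟩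
      · simp at h
  · rintro ⟨h3, hc⟩ x -
    by_cases h0 : x 0 = 0
    · by_cases h1 : x 1 = 0
      · exact Or.inr ⟨h0, h1⟩
      · refine Or.inl ⟨x 2 / (3 * x 1), x 3 / x 1, 0, x 1, h0.symm, by ring, ?_, ?_⟩ <;>
          field_simp <;> ring
    · obtain ⟨t, ht⟩ := hc (x 3 / x 0 - x 1 / x 0 * (x 2 / x 0) + (x 1 / x 0) ^ 3)
      have e1 : x 1 = x 0 * (x 1 / x 0) := by field_simp
      have e2 : x 2 = x 0 * (x 2 / x 0) := by field_simp
      have e3 : x 3 = x 0 * (x 3 / x 0) := by field_simp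
      generalize x 1 / x 0 = a at *
      generalize x 2 / x 0 = b at *
      generalize x 3 / x 0 = c at *
      refine Or.inl ⟨a - t, b - 3 * (a - t) * t, x 0, x 0 * t, rfl, ?_, ?_, ?_⟩
      · rw [e1]; ring
      · rw [e2]; ring
      · rw [e3]; linear_combination x 0 * ht
end
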